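/- There exists a polynomial Δ ∈ MvPolynomial D ℂ in the 10 coefficient variables such that: (i) Δ is irreducible; (ii) Δ is homogeneous of some positive degree; (iii) Δ is SL₃-invariant, i.e., for every g ∈ SL₃(ℂ) and every a : D → ℂ, Δ evaluated at the coefficient vector of f_a∘g equals Δ evaluated at a; and (iv) for every a : D → ℂ, Δ(a) ≠ 0 if and only if f_a is a smooth cubic form (i.e., the plane cubic C(f_a) is an elliptic curve). -/

import Mathlib

open MvPolynomial

/-- The 10-element index set of exponent vectors of degree-3 monomials in 3 variables. -/
def Dset := {d : Fin 3 → ℕ // d 0 + d 1 + d 2 = 3}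

instance : Finite Dset := by
  apply Finite.of_injective (fun d : Dset =>
    ((⟨d.1 0, by have := d.2; omega⟩ : Fin 4), (⟨d.1 1, by have := d.2; omega⟩ : Fin 4),
      (⟨d.1 2, by have := d.2; omega⟩ : Fin 4)))
  intro d e h
  simp only [Prod.ext_iff, Fin.ext_iff] at h
  apply Subtype.ext
  funext i
  fin_cases i
  · exact h.1
  · exact h.2.1
  · exact h.2.2

noncomputable instance : Fintype Dset := Fintype.ofFinite _

/-- The cubic form `f_a = Σ_d a_d x₀^{d0} x₁^{d1} x₂^{d2}` with coefficient vector `a`. -/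
noncomputable def cubic (a : Dset → ℂ) : MvPolynomial (Fin 3) ℂ :=
  ∑ d : Dset, C (a d) * (X 0) ^ d.1 0 * (X 1) ^ d.1 1 * (X 2) ^ d.1 2

/-- The coefficient vector of a cubic form. -/
noncomputable def coeffVec (f : MvPolynomial (Fin 3) ℂ) : Dset → ℂ :=
  fun d => MvPolynomial.coeff (Finsupp.equivFunOnFinite.symm d.1) f

/-- The linear substitution `f ∘ g`, i.e. `x_i ↦ Σ_j g_{ij} x_j`, so that
`(f∘g)(v) = f(g·v)`. -/
noncomputable def substSL (g : Matrix.SpecialLinearGroup (Fin 3) ℂ)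
    (f : MvPolynomial (Fin 3) ℂ) : MvPolynomial (Fin 3) ℂ :=
  aeval (fun i : Fin 3 => ∑ j : Fin 3, C (g.1 i j) * X j) f

/-- A cubic form is smooth iff at every nonzero zero of `f` the gradient of `f` does not
vanish; equivalently, the plane cubic `C(f) ⊂ ℙ²(ℂ)` is an elliptic curve. -/
def IsSmoothCubic (f : MvPolynomial (Fin 3) ℂ) : Prop :=
  ∀ v : Fin 3 → ℂ, v ≠ 0 → eval v f = 0 → ∃ i : Fin 3, eval v (pderiv i f) ≠ 0

theorem cubic_coeffs_zero {k0 k1 k2 k3 k4 k5 k6 k7 k8 k9 : ℂ}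
    (h : ∀ x y z : ℂ, k0*x^3+k1*x^2*y+k2*x^2*z+k3*x*y^2+k4*x*y*z+k5*x*z^2+k6*y^3+k7*y^2*z
      +k8*y*z^2+k9*z^3 = 0) :
    k0 = 0 ∧ k1 = 0 ∧ k2 = 0 ∧ k3 = 0 ∧ k4 = 0 ∧ k5 = 0 ∧ k6 = 0 ∧ k7 = 0 ∧ k8 = 0 ∧ k9 = 0 := by
  have h0 : k0 = 0 := by linear_combination h 1 0 0
  have h6 : k6 = 0 := by linear_combination h 0 1 0
  have h9 : k9 = 0 := by linear_combination h 0 0 1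
  have h1 : k1 = 0 := by linear_combination (h 1 1 0 - h 1 (-1) 0)/2 - h6
  have h3 : k3 = 0 := by linear_combination (h 1 1 0 + h 1 (-1) 0)/2 - h0
  have h2 : k2 = 0 := by linear_combination (h 1 0 1 - h 1 0 (-1))/2 - h9
  have h5 : k5 = 0 := by linear_combination (h 1 0 1 + h 1 0 (-1))/2 - h0
  have h7 : k7 = 0 := by linear_combination (h 0 1 1 - h 0 1 (-1))/2 - h9
  have h8 : k8 = 0 := by linear_combination (h 0 1 1 + h 0 1 (-1))/2 - h6
  have h4 : k4 = 0 := by linear_combination h 1 1 1 - h0 - h1 - h2 - h3 - h5 - h6 - h7 - h8 - h9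
  exact ⟨h0, h1, h2, h3, h4, h5, h6, h7, h8, h9⟩

theorem ex_root4 (a b c d : ℂ) : ∃ x : ℂ, x^4+a*x^3+b*x^2+c*x+d = 0 := by
  obtain ⟨x, hx⟩ := IsAlgClosed.exists_root
    (Polynomial.X^4 + (Polynomial.C a*Polynomial.X^3+Polynomial.C b*Polynomial.X^2
      +Polynomial.C c*Polynomial.X+Polynomial.C d) : Polynomial ℂ) (by
      have : (Polynomial.X^4 + (Polynomial.C a*Polynomial.X^3+Polynomial.C b*Polynomial.X^2
        +Polynomial.C c*Polynomial.X+Polynomial.C d) : Polynomial ℂ).degree = 4 := by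
        compute_degree!
      rw [this]; norm_num)
  refine ⟨x, ?_⟩
  simp [Polynomial.IsRoot] at hx
  linear_combination hx

theorem ex_root3 (a b c : ℂ) : ∃ x : ℂ, x^3+a*x^2+b*x+c = 0 := by
  obtain ⟨x, hx⟩ := IsAlgClosed.exists_root
    (Polynomial.X^3 + (Polynomial.C a*Polynomial.X^2+Polynomial.C b*Polynomial.X
      +Polynomial.C c) : Polynomial ℂ) (by
      have : (Polynomial.X^3 + (Polynomial.C a*Polynomial.X^2+Polynomial.C b*Polynomial.X
      +Polynomial.C c) : Polynomial ℂ).degree = 3 := by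
        compute_degree!
      rw [this]; norm_num)
  refine ⟨x, ?_⟩
  simp [Polynomial.IsRoot] at hx
  linear_combination hx

theorem ex_root2 (a b : ℂ) : ∃ x : ℂ, x^2+a*x+b = 0 := by
  obtain ⟨x, hx⟩ := IsAlgClosed.exists_root
    (Polynomial.X^2 + (Polynomial.C a*Polynomial.X+Polynomial.C b) : Polynomial ℂ) (by
      have : (Polynomial.X^2 + (Polynomial.C a*Polynomial.X+Polynomial.C b)
        : Polynomial ℂ).degree = 2 := by
        compute_degree!
      rw [this]; norm_num)
  refine ⟨x, ?_⟩
  simp [Polynomial.IsRoot] at hx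
  linear_combination hx

/-- roots of a depressed quartic -/
theorem quartic_roots (p q r : ℂ) : ∃ a b c d : ℂ, a+b+c+d = 0 ∧ a*b+a*c+a*d+b*c+b*d+c*d = p ∧
    -(a*b*c+a*b*d+a*c*d+b*c*d) = q ∧ a*b*c*d = r := by
  obtain ⟨a, ha⟩ := ex_root4 0 p q r
  obtain ⟨b, hb⟩ := ex_root3 a (a^2+p) (a^3+p*a+q)
  obtain ⟨c, hc⟩ := ex_root2 (a+b) (a^2+p+a*b+b^2)
  refine ⟨a, b, c, -(a+b+c), by ring, ?_, ?_, ?_⟩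
  · linear_combination -hc
  · linear_combination (a+b)*hc - hb
  · linear_combination a*hb - a*b*hc - ha

theorem cubic_roots (p q : ℂ) : ∃ a b c : ℂ, a+b+c = 0 ∧ a*b+a*c+b*c = p ∧
    -(a*b*c) = q := by
  obtain ⟨a, ha⟩ := ex_root3 0 p q
  obtain ⟨b, hb⟩ := ex_root2 a (a^2+p)
  refine ⟨a, b, -(a+b), by ring, ?_, ?_⟩
  · linear_combination -hb
  · linear_combination a*hb - ha

/-- double roots of depressed quartic, nonflex case. -/
theorem nf_double4 (c1 c2 c3 : ℂ)
    (hD : 6*c1*(-(6*c1^2+2*c3)*(8*c1*c3-9/2*c2^2) - 6*c1*c2*(-3*c1*c2))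
      - (-9/2*c2)*(9*c2*(8*c1*c3-9/2*c2^2) - 6*c1*c2*(4*c3))
      + (6*c1^2-2*c3)*(9*c2*(-3*c1*c2) - (-(6*c1^2+2*c3))*(4*c3)) = 0) :
    ∃ r : ℂ, r^4 - 4*c1*r^2-4*c2*r-4/3*c3 = 0 ∧ 4*r^3-8*c1*r-4*c2=0 := by
  obtain ⟨a, b, c, d, h1, h2, h3, h4⟩ := quartic_roots (-4*c1) (-4*c2) (-4/3*c3)
  obtain rfl : d = -(a+b+c) := by linear_combination h1
  obtain rfl : c1 = -(a*b+a*c+a*(-(a+b+c))+b*c+b*(-(a+b+c))+c*(-(a+b+c)))/4 := by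
    linear_combination h2/4
  obtain rfl : c2 = (a*b*c+a*b*(-(a+b+c))+a*c*(-(a+b+c))+b*c*(-(a+b+c)))/4 := by
    linear_combination h3/4
  obtain rfl : c3 = -3/4*(a*b*c*(-(a+b+c))) := by linear_combination 3/4*h4
  have : ((a-b)*(a-c)*(b-c)*(2*a+b+c)*(a+2*b+c)*(a+b+2*c))^2 = 0 := by
    linear_combination 1024/27*hD
  have := pow_eq_zero_iff (two_ne_zero) |>.1 this
  simp only [mul_eq_zero] at this
  rcases this with ((((h | h) | h) | h) | h) | h
  · obtain rfl : a = b := by linear_combination h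
    exact ⟨a, by ring, by ring⟩
  · obtain rfl : a = c := by linear_combination h
    exact ⟨a, by ring, by ring⟩
  · obtain rfl : b = c := by linear_combination h
    exact ⟨b, by ring, by ring⟩
  · obtain rfl : c = -(2*a+b) := by linear_combination h
    exact ⟨a, by ring, by ring⟩
  · obtain rfl : c = -(a+2*b) := by linear_combination h
    exact ⟨b, by ring, by ring⟩
  · obtain rfl : b = -(a+2*c) := by linear_combination h
    exact ⟨c, by ring, by ring⟩

theorem nf_double3 (c2 c3 : ℂ) (hD : 4*c2^3+c3^2 = 0) :
    ∃ r : ℂ, r^3 + 3*c2*r + c3 = 0 ∧ r^2 + c2 = 0 := by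
  obtain ⟨a, b, c, h1, h2, h3⟩ := cubic_roots (3*c2) c3
  obtain rfl : c = -(a+b) := by linear_combination h1
  obtain rfl : c2 = (a*b+a*(-(a+b))+b*(-(a+b)))/3 := by linear_combination -h2/3
  obtain rfl : c3 = -(a*b*(-(a+b))) := by linear_combination -h3
  have : ((a-b)*(2*a+b)*(a+2*b))^2 = 0 := by
    linear_combination -27*hD
  have := pow_eq_zero_iff (two_ne_zero) |>.1 this
  simp only [mul_eq_zero] at this
  rcases this with (h | h) | h
  · obtain rfl : a = b := by linear_combination h
    exact ⟨a, by ring, by ring⟩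
  · obtain rfl : b = -(2*a) := by linear_combination h
    exact ⟨a, by ring, by ring⟩
  · obtain rfl : a = -(2*b) := by linear_combination h
    exact ⟨b, by ring, by ring⟩

theorem nf1 (c1 c2 c3 l00 l01 l02 l10 l11 l12 l20 l21 l22 β : ℂ)
    (h : ∀ x y z : ℂ, (l00*x+l01*y+l02*z)*(2*c1*x*y+c2*y^2+2*x*z)
      + (l10*x+l11*y+l12*z)*(c1*x^2+2*c2*x*y+c3*y^2+z^2)
      + (l20*x+l21*y+l22*z)*(x^2+2*y*z)
      + β*((c1*y+z)*((c2*x+c3*y)*y-z*z) - (c1*x+c2*y)*((c1*x+c2*y)*y-z*x)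
        + x*((c1*x+c2*y)*z-(c2*x+c3*y)*x)) = 0) :
    (∃ x y z : ℂ, (x ≠ 0 ∨ y ≠ 0 ∨ z ≠ 0) ∧ 2*c1*x*y+c2*y^2+2*x*z = 0 ∧
      c1*x^2+2*c2*x*y+c3*y^2+z^2 = 0 ∧ x^2+2*y*z = 0) ∨
    (l00 = 0 ∧ l01 = 0 ∧ l02 = 0 ∧ l10 = 0 ∧ l11 = 0 ∧ l12 = 0 ∧ l20 = 0 ∧ l21 = 0 ∧ l22 = 0 ∧
      β = 0) := by
  by_cases hD : 6*c1*(-(6*c1^2+2*c3)*(8*c1*c3-9/2*c2^2) - 6*c1*c2*(-3*c1*c2))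
      - (-9/2*c2)*(9*c2*(8*c1*c3-9/2*c2^2) - 6*c1*c2*(4*c3))
      + (6*c1^2-2*c3)*(9*c2*(-3*c1*c2) - (-(6*c1^2+2*c3))*(4*c3)) = 0
  · left
    obtain ⟨r, h1, h2⟩ := nf_double4 c1 c2 c3 hD
    refine ⟨r, 1, -r^2/2, Or.inr (Or.inl one_ne_zero), ?_, ?_, by ring⟩
    · linear_combination -h2/4
    · linear_combination h1/4*(-3) + r/4 * h2
  · right
    have e := @cubic_coeffs_zero (c1*l10+l20-c2*β) 
      (2*c1*l00+c1*l11+2*c2*l10+l21+β*(-c1^2-c3))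
      (2*l00+c1*l12+l22+2*c1*β)
      (2*c1*l01+c2*l00+2*c2*l11+c3*l10-c1*c2*β)
      (2*c1*l02+2*l01+2*c2*l12+2*l20+3*c2*β)
      (2*l02+l10)
      (c2*l01+c3*l11+β*(c1*c3-c2^2))
      (c2*l02+c3*l12+2*l21+c3*β)
      (l11+2*l22-c1*β)
      (l12-β)
      (fun x y z => by linear_combination h x y z)
    obtain ⟨e0, e1, e2, e3, e4, e5, e6, e7, e8, e9⟩ := e
    have E12 : l12 = β := by linear_combination e9
    have E10 : l10 = -2*l02 := by linear_combination e5
    subst E12 E10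
    have E11 : l11 = 4*l00+7*c1*l12 := by linear_combination e8-2*e2
    subst E11
    have E22 : l22 = -2*l00-3*c1*l12 := by linear_combination e2
    subst E22
    have E21 : l21 = -c2*l02/2-c3*l12 := by linear_combination e7/2
    subst E21
    have E20 : l20 = 2*c1*l02+c2*l12 := by linear_combination e0
    subst E20
    have E01 : l01 = -3*c1*l02-7/2*c2*l12 := by linear_combination e4/2
    subst E01
    have f1 : 6*c1*l00-9/2*c2*l02+(6*c1^2-2*c3)*l12 = 0 := by linear_combination e1
    have f2 : 9*c2*l00-(6*c1^2+2*c3)*l02+6*c1*c2*l12 = 0 := by linear_combination e3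
    have f3 : 4*c3*l00-3*c1*c2*l02+(8*c1*c3-9/2*c2^2)*l12 = 0 := by linear_combination e6
    have g0 : l00 = 0 := by
      refine (mul_eq_zero.1 ?_).resolve_left hD
      linear_combination (-(6*c1^2+2*c3)*(8*c1*c3-9/2*c2^2) - 6*c1*c2*(-3*c1*c2))*f1
        - ((-9/2*c2)*(8*c1*c3-9/2*c2^2) - (6*c1^2-2*c3)*(-3*c1*c2))*f2
        + ((-9/2*c2)*(6*c1*c2) - (6*c1^2-2*c3)*(-(6*c1^2+2*c3)))*f3
    have g1 : l02 = 0 := by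
      refine (mul_eq_zero.1 ?_).resolve_left hD
      linear_combination -((9*c2)*(8*c1*c3-9/2*c2^2) - 6*c1*c2*(4*c3))*f1
        + ((6*c1)*(8*c1*c3-9/2*c2^2) - (6*c1^2-2*c3)*(4*c3))*f2
        - ((6*c1)*(6*c1*c2) - (6*c1^2-2*c3)*(9*c2))*f3
    have g2 : l12 = 0 := by
      refine (mul_eq_zero.1 ?_).resolve_left hD
      linear_combination ((9*c2)*(-3*c1*c2) - (-(6*c1^2+2*c3))*(4*c3))*f1
        - ((6*c1)*(-3*c1*c2) - (-9/2*c2)*(4*c3))*f2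
        + ((6*c1)*(-(6*c1^2+2*c3)) - (-9/2*c2)*(9*c2))*f3
    subst g0 g1 g2
    simp

theorem nf0 (c2 c3 l00 l01 l02 l10 l11 l12 l20 l21 l22 β : ℂ)
    (h : ∀ x y z : ℂ, (l00*x+l01*y+l02*z)*(x^2+c2*y^2)
      + (l10*x+l11*y+l12*z)*(2*c2*x*y+c3*y^2+z^2)
      + (l20*x+l21*y+l22*z)*(2*y*z)
      + β*(x*((c2*x+c3*y)*y-z*z) - (c2*y)*((c2*y)*y)) = 0) :
    (∃ x y z : ℂ, (x ≠ 0 ∨ y ≠ 0 ∨ z ≠ 0) ∧ x^2+c2*y^2 = 0 ∧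
      2*c2*x*y+c3*y^2+z^2 = 0 ∧ 2*y*z = 0) ∨
    (l00 = 0 ∧ l01 = 0 ∧ l02 = 0 ∧ l10 = 0 ∧ l11 = 0 ∧ l12 = 0 ∧ l20 = 0 ∧ l21 = 0 ∧ l22 = 0 ∧
      β = 0) := by
  by_cases hD : 4*c2^3+c3^2 = 0
  · left
    obtain ⟨r, h1, h2⟩ := nf_double3 c2 c3 hD
    refine ⟨r, 1, 0, Or.inr (Or.inl one_ne_zero), ?_, ?_, by ring⟩
    · linear_combination h2
    · linear_combination h1 - r*h2
  · right
    have e := @cubic_coeffs_zero l00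
      (l01+2*c2*l10+c2*β)
      l02
      (c2*l00+2*c2*l11+c3*l10+c3*β)
      (2*c2*l12+2*l20)
      (l10-β)
      (c2*l01+c3*l11-c2^2*β)
      (c2*l02+c3*l12+2*l21)
      (l11+2*l22)
      l12
      (fun x y z => by linear_combination h x y z)
    obtain ⟨e0, e1, e2, e3, e4, e5, e6, e7, e8, e9⟩ := e
    subst e0 e2 e9
    obtain rfl : l10 = β := by linear_combination e5
    obtain rfl : l01 = -3*c2*l10 := by linear_combination e1
    obtain rfl : l20 = 0 := by linear_combination e4/2
    obtain rfl : l21 = 0 := by linear_combination e7/2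
    obtain rfl : l11 = -2*l22 := by linear_combination e8
    have g1 : l10 = 0 := by
      refine (mul_eq_zero.1 ?_).resolve_left hD
      linear_combination c3*e3/2 - c2*e6
    have g2 : l22 = 0 := by
      refine (mul_eq_zero.1 ?_).resolve_left hD
      linear_combination (4*c2^2*e3/2 + c3*e6)*(-1/2)
    subst g1 g2
    simp

/-- trilinear form of a tensor -/
def TA (A : Fin 3 → Fin 3 → Fin 3 → ℂ) (x y z : Fin 3 → ℂ) : ℂ :=
  ∑ i, ∑ j, ∑ k, A i j k * x i * y j * z k

/-- symmetric tensor -/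
def SymT (A : Fin 3 → Fin 3 → Fin 3 → ℂ) : Prop :=
  ∀ i j k, A i j k = A j i k ∧ A i j k = A i k j

/-- singular tensor -/
def SingT (A : Fin 3 → Fin 3 → Fin 3 → ℂ) : Prop :=
  ∃ v : Fin 3 → ℂ, v ≠ 0 ∧ ∀ w, TA A w v v = 0

/-- the Hessian matrix -/
def hessT (A : Fin 3 → Fin 3 → Fin 3 → ℂ) (x : Fin 3 → ℂ) : Matrix (Fin 3) (Fin 3) ℂ :=
  Matrix.of fun i j => ∑ k, A k i j * x k

/-- linear dependency -/
def DepT (A : Fin 3 → Fin 3 → Fin 3 → ℂ) : Prop :=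
  ∃ (L : Matrix (Fin 3) (Fin 3) ℂ) (β : ℂ), ¬ (L = 0 ∧ β = 0) ∧
    ∀ x, TA A (L.mulVec x) x x + β * (hessT A x).det = 0

/-- change of basis; columns of `g` are the new basis -/
def chT (A : Fin 3 → Fin 3 → Fin 3 → ℂ) (g : Matrix (Fin 3) (Fin 3) ℂ) :
    Fin 3 → Fin 3 → Fin 3 → ℂ :=
  fun i j k => TA A (fun a => g a i) (fun a => g a j) (fun a => g a k)

theorem TA_swap12 {A} (hA : SymT A) (x y z) : TA A x y z = TA A y x z := by
  unfold TA
  rw [Finset.sum_comm]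
  refine Finset.sum_congr rfl fun i _ => Finset.sum_congr rfl fun j _ =>
    Finset.sum_congr rfl fun k _ => ?_
  rw [(hA j i k).1]; ring

theorem TA_swap23 {A} (hA : SymT A) (x y z) : TA A x y z = TA A x z y := by
  unfold TA
  refine Finset.sum_congr rfl fun i _ => ?_
  rw [Finset.sum_comm]
  refine Finset.sum_congr rfl fun j _ =>
    Finset.sum_congr rfl fun k _ => ?_
  rw [(hA i k j).2]; ring

theorem TA_add (A) (x x' y z) : TA A (x + x') y z = TA A x y z + TA A x' y z := by
  simp only [TA, ← Finset.sum_add_distrib, Pi.add_apply]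
  refine Finset.sum_congr rfl fun i _ => Finset.sum_congr rfl fun j _ =>
    Finset.sum_congr rfl fun k _ => ?_
  ring

theorem TA_smul (A) (c : ℂ) (x y z) : TA A (c • x) y z = c * TA A x y z := by
  simp only [TA, Finset.mul_sum, Pi.smul_apply, smul_eq_mul]
  refine Finset.sum_congr rfl fun i _ => Finset.sum_congr rfl fun j _ =>
    Finset.sum_congr rfl fun k _ => ?_
  ring

theorem chT_sym {A} (hA : SymT A) (g) : SymT (chT A g) := fun _ _ _ =>
  ⟨TA_swap12 hA _ _ _, TA_swap23 hA _ _ _⟩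

theorem TA_chT (A g x y z) : TA (chT A g) x y z = TA A (g.mulVec x) (g.mulVec y) (g.mulVec z) := by
  simp only [TA, chT, Matrix.mulVec, dotProduct, Fin.sum_univ_three]
  ring

theorem hessT_chT (A g x) : hessT (chT A g) x = g.transpose * hessT A (g.mulVec x) * g := by
  ext i j
  simp only [hessT, chT, TA, Matrix.mulVec, dotProduct, Matrix.mul_apply, Matrix.of_apply,
    Matrix.transpose_apply, Fin.sum_univ_three]
  ring

theorem SingT_of_chT {A g} (hg : IsUnit (Matrix.det g)) (h : SingT (chT A g)) : SingT A := by
  obtain ⟨v, hv, h⟩ := h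
  have hg' : IsUnit g := (Matrix.isUnit_iff_isUnit_det g).2 hg
  refine ⟨g.mulVec v, fun h0 => hv ?_, fun w => ?_⟩
  · exact (Matrix.mulVec_injective_iff_isUnit.2 hg') (by simpa using h0)
  · have := h (g⁻¹.mulVec w)
    rwa [TA_chT, Matrix.mulVec_mulVec, Matrix.mul_nonsing_inv _ hg, Matrix.one_mulVec] at this

theorem DepT_chT {A g} (hg : IsUnit (Matrix.det g)) (h : DepT A) : DepT (chT A g) := by
  obtain ⟨L, β, h0, h⟩ := h
  have hd : g.det ≠ 0 := hg.ne_zero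
  refine ⟨g⁻¹ * L * g, β / g.det ^ 2, fun h1 => h0 ?_, fun x => ?_⟩
  · constructor
    · have : g * (g⁻¹ * L * g) * g⁻¹ = L := by
        rw [← mul_assoc, ← mul_assoc, Matrix.mul_nonsing_inv _ hg, one_mul, mul_assoc,
          Matrix.mul_nonsing_inv _ hg, mul_one]
      rw [← this, h1.1]; simp
    · have := h1.2
      field_simp at this
      simpa using this
  · rw [TA_chT, hessT_chT, Matrix.mulVec_mulVec, ← mul_assoc, ← mul_assoc,
      Matrix.mul_nonsing_inv _ hg, one_mul, ← Matrix.mulVec_mulVec, Matrix.det_mul, Matrix.det_mul,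
      Matrix.det_transpose]
    rw [← h (g.mulVec x)]
    field_simp

/-- explicit tensor in terms of 10 numbers -/
theorem TA_expand {A} (hA : SymT A) (w v : Fin 3 → ℂ) : TA A w v v =
    w 0 * (A 0 0 0 * v 0 ^ 2 + 2 * A 0 0 1 * v 0 * v 1 + 2 * A 0 0 2 * v 0 * v 2
      + A 0 1 1 * v 1 ^ 2 + 2 * A 0 1 2 * v 1 * v 2 + A 0 2 2 * v 2 ^ 2)
    + w 1 * (A 0 0 1 * v 0 ^ 2 + 2 * A 0 1 1 * v 0 * v 1 + 2 * A 0 1 2 * v 0 * v 2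
      + A 1 1 1 * v 1 ^ 2 + 2 * A 1 1 2 * v 1 * v 2 + A 1 2 2 * v 2 ^ 2)
    + w 2 * (A 0 0 2 * v 0 ^ 2 + 2 * A 0 1 2 * v 0 * v 1 + 2 * A 0 2 2 * v 0 * v 2
      + A 1 1 2 * v 1 ^ 2 + 2 * A 1 2 2 * v 1 * v 2 + A 2 2 2 * v 2 ^ 2) := by
  simp only [TA, Fin.sum_univ_three]
  rw [(hA 0 1 0).2, (hA 0 2 0).2, (hA 0 2 1).2, (hA 1 0 0).1, (hA 1 0 1).1, (hA 1 0 2).1,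
    (hA 1 1 0).2, (hA 1 0 1).1, (hA 1 2 0).2, (hA 1 0 2).1, (hA 1 2 1).2, (hA 2 0 0).1,
    (hA 2 0 1).1, (hA 2 0 2).1, (hA 2 1 0).1, (hA 2 1 1).1, (hA 2 1 2).1, (hA 2 2 0).2,
    (hA 2 2 1).2, (hA 2 0 2).1, (hA 2 1 2).1, (hA 0 2 0).2, (hA 0 2 1).2,
    (hA 1 2 0).2, (hA 1 0 2).1, (hA 1 2 1).2, (hA 0 1 0).2]
  ring

theorem hessT_det {A} (hA : SymT A) (x : Fin 3 → ℂ) : (hessT A x).det =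
    (A 0 0 0 * x 0 + A 0 0 1 * x 1 + A 0 0 2 * x 2) *
     ((A 0 1 1 * x 0 + A 1 1 1 * x 1 + A 1 1 2 * x 2) *
        (A 0 2 2 * x 0 + A 1 2 2 * x 1 + A 2 2 2 * x 2)
      - (A 0 1 2 * x 0 + A 1 1 2 * x 1 + A 1 2 2 * x 2)^2)
    - (A 0 0 1 * x 0 + A 0 1 1 * x 1 + A 0 1 2 * x 2) *
     ((A 0 0 1 * x 0 + A 0 1 1 * x 1 + A 0 1 2 * x 2) *
        (A 0 2 2 * x 0 + A 1 2 2 * x 1 + A 2 2 2 * x 2)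
      - (A 0 1 2 * x 0 + A 1 1 2 * x 1 + A 1 2 2 * x 2) *
        (A 0 0 2 * x 0 + A 0 1 2 * x 1 + A 0 2 2 * x 2))
    + (A 0 0 2 * x 0 + A 0 1 2 * x 1 + A 0 2 2 * x 2) *
     ((A 0 0 1 * x 0 + A 0 1 1 * x 1 + A 0 1 2 * x 2) *
        (A 0 1 2 * x 0 + A 1 1 2 * x 1 + A 1 2 2 * x 2)
      - (A 0 1 1 * x 0 + A 1 1 1 * x 1 + A 1 1 2 * x 2) *
        (A 0 0 2 * x 0 + A 0 1 2 * x 1 + A 0 2 2 * x 2)) := by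
  rw [Matrix.det_fin_three]
  simp only [hessT, Matrix.of_apply, Fin.sum_univ_three]
  rw [(hA 0 1 0).2, (hA 0 2 0).2, (hA 0 2 1).2, (hA 1 0 0).1, (hA 1 0 1).1, (hA 1 0 2).1,
    (hA 1 1 0).2, (hA 1 0 1).1, (hA 1 2 0).2, (hA 1 0 2).1, (hA 1 2 1).2, (hA 2 0 0).1,
    (hA 2 0 1).1, (hA 2 0 2).1, (hA 2 1 0).1, (hA 2 1 1).1, (hA 2 1 2).1, (hA 2 2 0).2,
    (hA 2 2 1).2, (hA 2 0 2).1, (hA 2 1 2).1, (hA 0 2 0).2, (hA 0 2 1).2,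
    (hA 1 2 0).2, (hA 1 0 2).1, (hA 1 2 1).2, (hA 0 1 0).2]
  ring

theorem exists_dot_one {n : Fin 3 → ℂ} (hn : n ≠ 0) :
    ∃ w : Fin 3 → ℂ, n 0 * w 0 + n 1 * w 1 + n 2 * w 2 = 1 := by
  obtain ⟨i, hi⟩ := Function.ne_iff.1 hn
  simp only [Pi.zero_apply] at hi
  fin_cases i
  · exact ⟨![(n 0)⁻¹, 0, 0], by simp_all⟩
  · exact ⟨![0, (n 1)⁻¹, 0], by simp_all⟩
  · exact ⟨![0, 0, (n 2)⁻¹], by simp_all⟩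

theorem TA_add2 {A} (hA : SymT A) (x y y' z) : TA A x (y + y') z = TA A x y z + TA A x y' z := by
  rw [TA_swap12 hA, TA_add, TA_swap12 hA y, TA_swap12 hA y']

theorem TA_smul2 {A} (hA : SymT A) (c : ℂ) (x y z) : TA A x (c • y) z = c * TA A x y z := by
  rw [TA_swap12 hA, TA_smul, TA_swap12 hA y]

theorem TA_add3 {A} (hA : SymT A) (x y z z') : TA A x y (z + z') = TA A x y z + TA A x y z' := by
  rw [TA_swap23 hA, TA_add2 hA, TA_swap23 hA x z, TA_swap23 hA x z']

theorem TA_smul3 {A} (hA : SymT A) (c : ℂ) (x y z) : TA A x y (c • z) = c * TA A x y z := by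
  rw [TA_swap23 hA, TA_smul2 hA, TA_swap23 hA x z]

/-- matrix with columns u w v -/
def colM (u w v : Fin 3 → ℂ) : Matrix (Fin 3) (Fin 3) ℂ :=
  Matrix.of fun i j => ![u i, w i, v i] j

/-- determinant of three vectors -/
def det3 (u w v : Fin 3 → ℂ) : ℂ :=
  u 0 * (w 1 * v 2 - w 2 * v 1) - u 1 * (w 0 * v 2 - w 2 * v 0) + u 2 * (w 0 * v 1 - w 1 * v 0)

theorem det_colM (u w v : Fin 3 → ℂ) : (colM u w v).det = det3 u w v := by
  rw [Matrix.det_fin_three]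
  simp [colM, det3]
  ring

theorem exists_zero (A : Fin 3 → Fin 3 → Fin 3 → ℂ) : ∃ v : Fin 3 → ℂ, v ≠ 0 ∧ TA A v v v = 0 := by
  by_cases h : A 0 0 0 = 0
  · refine ⟨![1, 0, 0], fun h0 => ?_, ?_⟩
    · simpa using congrFun h0 0
    · simp [TA, Fin.sum_univ_three, h]
  · obtain ⟨x, hx⟩ := ex_root3 ((A 0 0 1 + A 0 1 0 + A 1 0 0) / A 0 0 0)
      ((A 0 1 1 + A 1 0 1 + A 1 1 0) / A 0 0 0) (A 1 1 1 / A 0 0 0)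
    refine ⟨![x, 1, 0], fun h0 => ?_, ?_⟩
    · simpa using congrFun h0 1
    · field_simp at hx
      simp [TA, Fin.sum_univ_three]
      linear_combination hx

theorem chT_colM (A u w v) (i j k : Fin 3) : chT A (colM u w v) i j k =
    TA A (![u, w, v] i) (![u, w, v] j) (![u, w, v] k) := by
  unfold chT
  congr 1 <;> ext a <;> simp only [colM, Matrix.of_apply]
  · fin_cases i <;> rfl
  · fin_cases j <;> rfl
  · fin_cases k <;> rfl

theorem exists_frame {A} (hA : SymT A) (hs : ¬ SingT A) : ∃ u w v : Fin 3 → ℂ, det3 u w v ≠ 0 ∧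
    TA A v v v = 0 ∧ TA A u v v = 0 ∧ TA A w v v = 1 := by
  obtain ⟨v, hv, hvv⟩ := exists_zero A
  set n : Fin 3 → ℂ := fun i => TA A (Pi.single i 1) v v with hn
  have hdot : ∀ w, TA A w v v = n 0 * w 0 + n 1 * w 1 + n 2 * w 2 := by
    intro w
    have : w = w 0 • Pi.single 0 1 + w 1 • Pi.single 1 1 + w 2 • Pi.single 2 1 := by
      ext i; fin_cases i <;> simp
    conv_lhs => rw [this]
    simp only [TA_add, TA_smul, hn]
    ring
  have hn0 : n ≠ 0 := by
    intro h0
    apply hs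
    refine ⟨v, hv, fun w => ?_⟩
    rw [hdot, h0]; simp
  obtain ⟨w, hw⟩ := exists_dot_one hn0
  obtain ⟨m, hm⟩ := exists_dot_one hv
  have hnv := hvv
  rw [hdot] at hnv
  refine ⟨![n 1 * m 2 - n 2 * m 1, n 2 * m 0 - n 0 * m 2, n 0 * m 1 - n 1 * m 0], w, v, ?_, hvv,
    ?_, ?_⟩
  · have : det3 ![n 1 * m 2 - n 2 * m 1, n 2 * m 0 - n 0 * m 2, n 0 * m 1 - n 1 * m 0] w v = 1 := by
      simp [det3]
      linear_combination (v 0 * m 0 + v 1 * m 1 + v 2 * m 2) * hw + hm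
        - (w 0 * m 0 + w 1 * m 1 + w 2 * m 2) * hnv
    rw [this]; exact one_ne_zero
  · rw [hdot]; simp; ring
  · rw [hdot, hw]

theorem DepT_contra {B} (hB : SymT B) (hs : ¬ SingT B) (hd : DepT B)
    (h : ∀ L : Matrix (Fin 3) (Fin 3) ℂ, ∀ β : ℂ,
      (∀ x y z : ℂ, 
        (L 0 0*x+L 0 1*y+L 0 2*z)*(B 0 0 0 * x ^ 2 + 2 * B 0 0 1 * x * y + 2 * B 0 0 2 * x * z
          + B 0 1 1 * y ^ 2 + 2 * B 0 1 2 * y * z + B 0 2 2 * z ^ 2)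
        + (L 1 0*x+L 1 1*y+L 1 2*z)*(B 0 0 1 * x ^ 2 + 2 * B 0 1 1 * x * y + 2 * B 0 1 2 * x * z
          + B 1 1 1 * y ^ 2 + 2 * B 1 1 2 * y * z + B 1 2 2 * z ^ 2)
        + (L 2 0*x+L 2 1*y+L 2 2*z)*(B 0 0 2 * x ^ 2 + 2 * B 0 1 2 * x * y + 2 * B 0 2 2 * x * z
          + B 1 1 2 * y ^ 2 + 2 * B 1 2 2 * y * z + B 2 2 2 * z ^ 2)
        + β * ((B 0 0 0 * x + B 0 0 1 * y + B 0 0 2 * z) *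
     ((B 0 1 1 * x + B 1 1 1 * y + B 1 1 2 * z) *
        (B 0 2 2 * x + B 1 2 2 * y + B 2 2 2 * z)
      - (B 0 1 2 * x + B 1 1 2 * y + B 1 2 2 * z)^2)
    - (B 0 0 1 * x + B 0 1 1 * y + B 0 1 2 * z) *
     ((B 0 0 1 * x + B 0 1 1 * y + B 0 1 2 * z) *
        (B 0 2 2 * x + B 1 2 2 * y + B 2 2 2 * z)
      - (B 0 1 2 * x + B 1 1 2 * y + B 1 2 2 * z) *
        (B 0 0 2 * x + B 0 1 2 * y + B 0 2 2 * z))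
    + (B 0 0 2 * x + B 0 1 2 * y + B 0 2 2 * z) *
     ((B 0 0 1 * x + B 0 1 1 * y + B 0 1 2 * z) *
        (B 0 1 2 * x + B 1 1 2 * y + B 1 2 2 * z)
      - (B 0 1 1 * x + B 1 1 1 * y + B 1 1 2 * z) *
        (B 0 0 2 * x + B 0 1 2 * y + B 0 2 2 * z))) = 0) →
      (∃ x y z : ℂ, (x ≠ 0 ∨ y ≠ 0 ∨ z ≠ 0) ∧
        B 0 0 0 * x ^ 2 + 2 * B 0 0 1 * x * y + 2 * B 0 0 2 * x * z
          + B 0 1 1 * y ^ 2 + 2 * B 0 1 2 * y * z + B 0 2 2 * z ^ 2 = 0 ∧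
        B 0 0 1 * x ^ 2 + 2 * B 0 1 1 * x * y + 2 * B 0 1 2 * x * z
          + B 1 1 1 * y ^ 2 + 2 * B 1 1 2 * y * z + B 1 2 2 * z ^ 2 = 0 ∧
        B 0 0 2 * x ^ 2 + 2 * B 0 1 2 * x * y + 2 * B 0 2 2 * x * z
          + B 1 1 2 * y ^ 2 + 2 * B 1 2 2 * y * z + B 2 2 2 * z ^ 2 = 0) ∨
      (L 0 0 = 0 ∧ L 0 1 = 0 ∧ L 0 2 = 0 ∧ L 1 0 = 0 ∧ L 1 1 = 0 ∧ L 1 2 = 0 ∧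
        L 2 0 = 0 ∧ L 2 1 = 0 ∧ L 2 2 = 0 ∧ β = 0)) : False := by
  obtain ⟨L, β, h0, hL⟩ := hd
  rcases h L β (fun x y z => by
      have := hL ![x, y, z]
      rw [TA_expand hB, hessT_det hB] at this
      simp only [Matrix.mulVec, dotProduct, Fin.sum_univ_three, Matrix.cons_val] at this
      exact this) with ⟨x, y, z, hxyz, e0, e1, e2⟩ | h
  · apply hs
    refine ⟨![x, y, z], fun hh => ?_, fun w => ?_⟩
    · have a0 := congrFun hh 0
      have a1 := congrFun hh 1
      have a2 := congrFun hh 2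
      simp at a0 a1 a2
      simp [a0, a1, a2] at hxyz
    · rw [TA_expand hB]
      simp only [Matrix.cons_val]
      rw [e0, e1, e2]; ring
  · apply h0
    obtain ⟨h1, h2, h3, h4, h5, h6, h7, h8, h9, h10⟩ := h
    refine ⟨?_, h10⟩
    ext i j
    fin_cases i <;> fin_cases j <;> assumption

theorem det3_1 (u w v) (s t : ℂ) : det3 (s • u + t • v) w v = s * det3 u w v := by
  simp [det3]; ring

theorem det3_2 (u w v) (s t : ℂ) : det3 u (w + s • u + t • v) v = det3 u w v := by
  simp [det3]; ring

theorem DepT.singT {A} (hA : SymT A) (hd : DepT A) : SingT A := by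
  by_contra hs
  obtain ⟨u, w, v, hdet, hvvv, huvv, hwvv⟩ := exists_frame hA hs
  -- generic facts in a frame
  have key : ∀ u w v, det3 u w v ≠ 0 → SymT (chT A (colM u w v)) ∧ ¬ SingT (chT A (colM u w v)) ∧
      DepT (chT A (colM u w v)) := by
    intro u w v h
    have hu : IsUnit (colM u w v).det := by rw [det_colM]; exact h.isUnit
    exact ⟨chT_sym hA _, fun h' => hs (SingT_of_chT hu h'), DepT_chT hu hd⟩
  have mulin : ∀ (x y z z' : Fin 3 → ℂ) (c : ℂ), TA A x y (z + c • z') = TA A x y z + c * TA A x y z' := by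
    intro x y z z' c; rw [TA_add3 hA, TA_smul3 hA]
  by_cases hl : TA A u u v = 0
  · by_cases hc : TA A u u u = 0
    · -- singular
      obtain ⟨s1, hs1⟩ : ∃ s, TA A u w v + s = 0 := ⟨-_, add_neg_cancel _⟩
      set u1 := (1:ℂ) • u + s1 • v with hu1
      obtain ⟨s, hs'⟩ := ex_root2 0 (TA A u1 u1 w)
      have hd1 : det3 u1 w v ≠ 0 := by rw [hu1, det3_1]; simpa using hdet
      obtain ⟨hB, hBs, hBd⟩ := key _ _ _ hd1
      apply hBs
      refine ⟨![1, 0, s], fun hh => by simpa using congrFun hh 0, fun x => ?_⟩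
      rw [TA_expand hB]
      have e1 : TA A u1 u1 u1 = 0 := by
        simp only [hu1, TA_add, TA_smul, TA_add2 hA, TA_smul2 hA, TA_add3 hA, TA_smul3 hA,
          TA_swap23 hA v v u, TA_swap12 hA v u, TA_swap23 hA u v u, hvvv, huvv, hl, hc]
        ring
      have e2 : TA A u1 u1 v = 0 := by
        simp only [hu1, TA_add, TA_smul, TA_add2 hA, TA_smul2 hA, TA_add3 hA, TA_smul3 hA,
          TA_swap23 hA v v u, TA_swap12 hA v u, TA_swap23 hA u v u, hvvv, huvv, hl, hc]
        ring
      have e3 : TA A u1 v v = 0 := by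
        simp only [hu1, TA_add, TA_smul, hvvv, huvv]; ring
      have e4 : TA A u1 w v = 0 := by
        simp only [hu1, TA_add, TA_smul, TA_swap12 hA v w, hwvv]
        linear_combination hs1
      simp only [chT_colM, Matrix.cons_val, e1, e2, e3, e4, hwvv, hvvv]
      linear_combination x 1 * hs'
    · -- flex case
      obtain ⟨s, hs1⟩ := IsAlgClosed.exists_pow_nat_eq ((TA A u u u)⁻¹) (n := 3) (by norm_num)
      have hs0 : s ≠ 0 := by
        rintro rfl
        simp at hs1
        exact hc hs1.symm
      set t := - s * TA A u w v with ht
      set u1 := s • u + t • v with hu1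
      have hd1 : det3 u1 w v ≠ 0 := by rw [hu1, det3_1]; exact mul_ne_zero hs0 hdet
      have e1 : TA A u1 u1 u1 = 1 := by
        simp only [hu1, TA_add, TA_smul, TA_add2 hA, TA_smul2 hA, TA_add3 hA, TA_smul3 hA,
          TA_swap23 hA v v u, TA_swap12 hA v u, TA_swap23 hA u v u, hvvv, huvv, hl]
        have : s^3 * TA A u u u = 1 := by rw [hs1]; exact inv_mul_cancel₀ hc
        linear_combination this
      have e2 : TA A u1 u1 v = 0 := by
        simp only [hu1, TA_add, TA_smul, TA_add2 hA, TA_smul2 hA, TA_add3 hA, TA_smul3 hA,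
          TA_swap23 hA v v u, TA_swap12 hA v u, TA_swap23 hA u v u, hvvv, huvv, hl]
        ring
      have e3 : TA A u1 v v = 0 := by
        simp only [hu1, TA_add, TA_smul, hvvv, huvv]; ring
      have e4 : TA A u1 w v = 0 := by
        simp only [hu1, TA_add, TA_smul, TA_swap12 hA v w, hwvv, ht]
        ring
      clear_value u1 t
      set p := - TA A u1 u1 w with hp
      set q := - TA A w w v / 2 with hq
      set w1 := w + p • u1 + q • v with hw1
      have hd2 : det3 u1 w1 v ≠ 0 := by rw [hw1, det3_2]; exact hd1
      have f1 : TA A u1 u1 w1 = 0 := by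
        simp only [hw1, TA_add3 hA, TA_smul3 hA, e1, e2, hp]; ring
      have f2 : TA A u1 w1 v = 0 := by
        simp only [hw1, TA_add2 hA, TA_smul2 hA, e2, e3, e4]; ring
      have f3 : TA A w1 v v = 1 := by
        simp only [hw1, TA_add, TA_smul, e3, hwvv, hvvv]; ring
      have f4 : TA A w1 w1 v = 0 := by
        simp only [hw1, TA_add, TA_smul, TA_add2 hA, TA_smul2 hA, TA_swap12 hA v w,
          TA_swap12 hA v u1, TA_swap12 hA w u1, e2, e3, e4, hwvv, hvvv, hq]; ring
      clear_value w1 p q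
      obtain ⟨hB, hBs, hBd⟩ := key _ _ _ hd2
      refine DepT_contra hB hBs hBd fun L β h => ?_
      simp only [chT_colM, Matrix.cons_val, e1, e2, e3, f1, f2, f3, f4, hvvv] at h ⊢
      refine (nf0 (TA A u1 w1 w1) (TA A w1 w1 w1) _ _ _ _ _ _ _ _ _ β
        fun x y z => ?_).imp ?_ (fun h => h)
      · linear_combination h x y z
      · rintro ⟨x, y, z, h0, h1, h2, h3⟩
        exact ⟨x, y, z, h0, by linear_combination h1, by linear_combination h2,
          by linear_combination h3⟩
  · obtain ⟨s, hs1⟩ := IsAlgClosed.exists_pow_nat_eq ((TA A u u v)⁻¹) (n := 2) (by norm_num)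
    have hs0 : s ≠ 0 := by
      rintro rfl
      simp at hs1
      exact hl hs1.symm
    have hs2 : s^2 * TA A u u v = 1 := by rw [hs1]; exact inv_mul_cancel₀ hl
    set t := - s^3 * TA A u u u / 3 with ht
    set u1 := s • u + t • v with hu1
    have hd1 : det3 u1 w v ≠ 0 := by rw [hu1, det3_1]; exact mul_ne_zero hs0 hdet
    have e1 : TA A u1 u1 u1 = 0 := by
      simp only [hu1, TA_add, TA_smul, TA_add2 hA, TA_smul2 hA, TA_add3 hA, TA_smul3 hA,
        TA_swap23 hA v v u, TA_swap12 hA v u, TA_swap23 hA u v u, hvvv, huvv]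
      linear_combination 3 * t * hs2 + 3 * ht
    have e2 : TA A u1 u1 v = 1 := by
      simp only [hu1, TA_add, TA_smul, TA_add2 hA, TA_smul2 hA,
        TA_swap12 hA v u, hvvv, huvv]
      linear_combination hs2
    have e3 : TA A u1 v v = 0 := by
      simp only [hu1, TA_add, TA_smul, hvvv, huvv]; ring
    clear_value u1 t
    set p := - TA A u1 w v with hp
    set q := - (TA A w w v + 2 * p * TA A u1 w v + p^2) / 2 with hq
    set w1 := w + p • u1 + q • v with hw1
    have hd2 : det3 u1 w1 v ≠ 0 := by rw [hw1, det3_2]; exact hd1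
    have f2 : TA A u1 w1 v = 0 := by
      simp only [hw1, TA_add2 hA, TA_smul2 hA, e2, e3, hp]; ring
    have f3 : TA A w1 v v = 1 := by
      simp only [hw1, TA_add, TA_smul, e3, hwvv, hvvv]; ring
    have f4 : TA A w1 w1 v = 0 := by
      simp only [hw1, TA_add, TA_smul, TA_add2 hA, TA_smul2 hA, TA_swap12 hA v w,
        TA_swap12 hA v u1, TA_swap12 hA w u1, e2, e3, hwvv, hvvv, hq]; ring
    clear_value w1 p q
    obtain ⟨hB, hBs, hBd⟩ := key _ _ _ hd2
    refine DepT_contra hB hBs hBd fun L β h => ?_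
    simp only [chT_colM, Matrix.cons_val, e1, e2, e3, f2, f3, f4, hvvv] at h ⊢
    refine (nf1 (TA A u1 u1 w1) (TA A u1 w1 w1) (TA A w1 w1 w1) _ _ _ _ _ _ _ _ _ β
      fun x y z => ?_).imp ?_ (fun h => h)
    · linear_combination h x y z
    · rintro ⟨x, y, z, h0, h1, h2, h3⟩
      exact ⟨x, y, z, h0, by linear_combination h1, by linear_combination h2,
        by linear_combination h3⟩

/-- the ten exponent vectors -/
def dd : Fin 10 → Dset :=
  ![⟨![3, 0, 0], rfl⟩, ⟨![2, 1, 0], rfl⟩, ⟨![2, 0, 1], rfl⟩, ⟨![1, 2, 0], rfl⟩, ⟨![1, 1, 1], rfl⟩,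
    ⟨![1, 0, 2], rfl⟩, ⟨![0, 3, 0], rfl⟩, ⟨![0, 2, 1], rfl⟩, ⟨![0, 1, 2], rfl⟩, ⟨![0, 0, 3], rfl⟩]

/-- index of an exponent vector -/
def di (d : Dset) : Fin 10 :=
  if d.1 0 = 3 then 0 else if d.1 0 = 2 then (if d.1 1 = 1 then 1 else 2)
  else if d.1 0 = 1 then (if d.1 1 = 2 then 3 else if d.1 1 = 1 then 4 else 5)
  else if d.1 1 = 3 then 6 else if d.1 1 = 2 then 7 else if d.1 1 = 1 then 8 else 9

theorem di_dd (i : Fin 10) : di (dd i) = i := by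
  fin_cases i <;> rfl

theorem dset_ext {d e : Dset} (h0 : d.1 0 = e.1 0) (h1 : d.1 1 = e.1 1) : d = e := by
  apply Subtype.ext
  have := d.2
  have := e.2
  funext i
  fin_cases i
  · exact h0
  · exact h1
  · show d.1 2 = e.1 2
    omega

theorem dd_di (d : Dset) : dd (di d) = d := by
  have h := d.2
  unfold di
  split_ifs <;> apply dset_ext <;> simp [dd] <;> omega

/-- the ten exponent vectors -/
def ddE : Fin 10 ≃ Dset := ⟨dd, di, di_dd, dd_di⟩

theorem sum_Dset {M : Type*} [AddCommMonoid M] (F : Dset → M) : ∑ d, F d =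
    F (dd 0) + F (dd 1) + F (dd 2) + F (dd 3) + F (dd 4) + F (dd 5) + F (dd 6) + F (dd 7) + F (dd 8)
     + F (dd 9) := by
  rw [← Equiv.sum_comp ddE]
  simp only [Fin.sum_univ_succ, Fin.sum_univ_zero, ← add_assoc, add_zero]
  rfl

/-- symmetric tensor of a cubic -/
noncomputable def tens (c : Fin 10 → ℂ) : Fin 3 → Fin 3 → Fin 3 → ℂ :=
  ![![![c 0, c 1 / 3, c 2 / 3], ![c 1 / 3, c 3 / 3, c 4 / 6], ![c 2 / 3, c 4 / 6, c 5 / 3]],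
    ![![c 1 / 3, c 3 / 3, c 4 / 6], ![c 3 / 3, c 6, c 7 / 3], ![c 4 / 6, c 7 / 3, c 8 / 3]],
    ![![c 2 / 3, c 4 / 6, c 5 / 3], ![c 4 / 6, c 7 / 3, c 8 / 3], ![c 5 / 3, c 8 / 3, c 9]]]

theorem tens_sym (c) : SymT (tens c) := by
  intro i j k
  fin_cases i <;> fin_cases j <;> fin_cases k <;> exact ⟨rfl, rfl⟩

/-- value of cubic -/
def cub (c : Fin 10 → ℂ) (v : Fin 3 → ℂ) : ℂ :=
  c 0 * v 0 ^ 3 + c 1 * v 0 ^ 2 * v 1 + c 2 * v 0 ^ 2 * v 2 + c 3 * v 0 * v 1 ^ 2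
  + c 4 * v 0 * v 1 * v 2 + c 5 * v 0 * v 2 ^ 2 + c 6 * v 1 ^ 3 + c 7 * v 1 ^ 2 * v 2
  + c 8 * v 1 * v 2 ^ 2 + c 9 * v 2 ^ 3

/-- gradient -/
def grd (c : Fin 10 → ℂ) (v : Fin 3 → ℂ) : Fin 3 → ℂ :=
  ![3 * c 0 * v 0 ^ 2 + 2 * c 1 * v 0 * v 1 + 2 * c 2 * v 0 * v 2 + c 3 * v 1 ^ 2
      + c 4 * v 1 * v 2 + c 5 * v 2 ^ 2,
    c 1 * v 0 ^ 2 + 2 * c 3 * v 0 * v 1 + c 4 * v 0 * v 2 + 3 * c 6 * v 1 ^ 2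
      + 2 * c 7 * v 1 * v 2 + c 8 * v 2 ^ 2,
    c 2 * v 0 ^ 2 + c 4 * v 0 * v 1 + 2 * c 5 * v 0 * v 2 + c 7 * v 1 ^ 2
      + 2 * c 8 * v 1 * v 2 + 3 * c 9 * v 2 ^ 2]

theorem eval_cubic (a : Dset → ℂ) (v) : eval v (cubic a) = cub (a ∘ dd) v := by
  unfold cubic
  rw [sum_Dset]
  simp [dd, cub]

theorem pderiv_cubic (a : Dset → ℂ) (v) (i) :
    eval v (pderiv i (cubic a)) = grd (a ∘ dd) v i := by
  unfold cubic
  rw [sum_Dset]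
  fin_cases i <;>
  simp [dd, grd, pderiv_X, Derivation.leibniz, Derivation.leibniz_pow, smul_eq_mul] <;> ring

theorem TA_tens (c w v) : 3 * TA (tens c) w v v =
    w 0 * grd c v 0 + w 1 * grd c v 1 + w 2 * grd c v 2 := by
  rw [TA_expand (tens_sym c)]
  simp [tens, grd]
  ring

theorem cub_tens (c v) : cub c v = TA (tens c) v v v := by
  rw [TA_expand (tens_sym c)]
  simp [tens, cub]
  ring

/-- singular cubic -/
def SingC (c : Fin 10 → ℂ) : Prop := ∃ v : Fin 3 → ℂ, v ≠ 0 ∧ ∀ i, grd c v i = 0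

theorem singC_iff (c) : SingC c ↔ SingT (tens c) := by
  constructor
  · rintro ⟨v, hv, h⟩
    refine ⟨v, hv, fun w => ?_⟩
    have := TA_tens c w v
    rw [h, h, h] at this
    linear_combination this / 3
  · rintro ⟨v, hv, h⟩
    refine ⟨v, hv, fun i => ?_⟩
    have := TA_tens c (Pi.single i 1) v
    rw [h] at this
    fin_cases i <;> simpa using this.symm

theorem smooth_iff (a : Dset → ℂ) : IsSmoothCubic (cubic a) ↔ ¬ SingC (a ∘ dd) := by
  constructor
  · rintro h ⟨v, hv, hs⟩
    have h3 := TA_tens (a ∘ dd) v v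
    rw [hs, hs, hs] at h3
    obtain ⟨i, hi⟩ := h v hv (by rw [eval_cubic, cub_tens]; linear_combination h3 / 3)
    rw [pderiv_cubic] at hi
    exact hi (hs i)
  · intro h v hv _
    by_contra! hc
    exact h ⟨v, hv, fun i => by rw [← pderiv_cubic]; exact hc i⟩

/-- product of three linear forms -/
def prod3 {S : Type*} [CommRing S] (l n m : Fin 3 → S) : Fin 10 → S :=
  ![l 0 * n 0 * m 0,
    l 0 * n 0 * m 1 + l 0 * n 1 * m 0 + l 1 * n 0 * m 0,
    l 0 * n 0 * m 2 + l 0 * n 2 * m 0 + l 2 * n 0 * m 0,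
    l 0 * n 1 * m 1 + l 1 * n 0 * m 1 + l 1 * n 1 * m 0,
    l 0 * n 1 * m 2 + l 0 * n 2 * m 1 + l 1 * n 0 * m 2 + l 1 * n 2 * m 0 + l 2 * n 0 * m 1
      + l 2 * n 1 * m 0,
    l 0 * n 2 * m 2 + l 2 * n 0 * m 2 + l 2 * n 2 * m 0,
    l 1 * n 1 * m 1,
    l 1 * n 1 * m 2 + l 1 * n 2 * m 1 + l 2 * n 1 * m 1,
    l 1 * n 2 * m 2 + l 2 * n 1 * m 2 + l 2 * n 2 * m 1,
    l 2 * n 2 * m 2]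

theorem cub_prod3 (l n m : Fin 3 → ℂ) (v) : cub (prod3 l n m) v =
    (l 0 * v 0 + l 1 * v 1 + l 2 * v 2) * (n 0 * v 0 + n 1 * v 1 + n 2 * v 2)
      * (m 0 * v 0 + m 1 * v 1 + m 2 * v 2) := by
  simp [cub, prod3]
  ring

/-- coefficients of the Hessian -/
def hessC {S : Type*} [CommRing S] (c : Fin 10 → S) : Fin 10 → S := fun i =>
  prod3 ![6 * c 0, 2 * c 1, 2 * c 2] ![2 * c 3, 6 * c 6, 2 * c 7] ![2 * c 5, 2 * c 8, 6 * c 9] i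
  + 2 * prod3 ![2 * c 1, 2 * c 3, c 4] ![c 4, 2 * c 7, 2 * c 8] ![2 * c 2, c 4, 2 * c 5] i
  - prod3 ![6 * c 0, 2 * c 1, 2 * c 2] ![c 4, 2 * c 7, 2 * c 8] ![c 4, 2 * c 7, 2 * c 8] i
  - prod3 ![2 * c 3, 6 * c 6, 2 * c 7] ![2 * c 2, c 4, 2 * c 5] ![2 * c 2, c 4, 2 * c 5] i
  - prod3 ![2 * c 5, 2 * c 8, 6 * c 9] ![2 * c 1, 2 * c 3, c 4] ![2 * c 1, 2 * c 3, c 4] i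

theorem cub_hessC (c v) : cub (hessC c) v = 216 * (hessT (tens c) v).det := by
  have : cub (hessC c) v =
    cub (prod3 ![6 * c 0, 2 * c 1, 2 * c 2] ![2 * c 3, 6 * c 6, 2 * c 7] ![2 * c 5, 2 * c 8, 6 * c 9]) v
  + 2 * cub (prod3 ![2 * c 1, 2 * c 3, c 4] ![c 4, 2 * c 7, 2 * c 8] ![2 * c 2, c 4, 2 * c 5]) v
  - cub (prod3 ![6 * c 0, 2 * c 1, 2 * c 2] ![c 4, 2 * c 7, 2 * c 8] ![c 4, 2 * c 7, 2 * c 8]) v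
  - cub (prod3 ![2 * c 3, 6 * c 6, 2 * c 7] ![2 * c 2, c 4, 2 * c 5] ![2 * c 2, c 4, 2 * c 5]) v
  - cub (prod3 ![2 * c 5, 2 * c 8, 6 * c 9] ![2 * c 1, 2 * c 3, c 4] ![2 * c 1, 2 * c 3, c 4]) v := by
    simp only [cub, hessC]
    ring
  rw [this, hessT_det (tens_sym c)]
  simp only [cub_prod3]
  simp [tens]
  ring

/-- the 10 by 10 matrix -/
def Nmat {S : Type*} [CommRing S] (c : Fin 10 → S) : Matrix (Fin 10) (Fin 10) S :=
  Matrix.of ![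
    ![3 * c 0, 2 * c 1, 2 * c 2, c 3, c 4, c 5, 0, 0, 0, 0],
    ![c 1, 2 * c 3, c 4, 3 * c 6, 2 * c 7, c 8, 0, 0, 0, 0],
    ![c 2, c 4, 2 * c 5, c 7, 2 * c 8, 3 * c 9, 0, 0, 0, 0],
    ![0, 3 * c 0, 0, 2 * c 1, 2 * c 2, 0, c 3, c 4, c 5, 0],
    ![0, c 1, 0, 2 * c 3, c 4, 0, 3 * c 6, 2 * c 7, c 8, 0],
    ![0, c 2, 0, c 4, 2 * c 5, 0, c 7, 2 * c 8, 3 * c 9, 0],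
    ![0, 0, 3 * c 0, 0, 2 * c 1, 2 * c 2, 0, c 3, c 4, c 5],
    ![0, 0, c 1, 0, 2 * c 3, c 4, 0, 3 * c 6, 2 * c 7, c 8],
    ![0, 0, c 2, 0, c 4, 2 * c 5, 0, c 7, 2 * c 8, 3 * c 9],
    hessC c]

/-- monomials -/
def mon (v : Fin 3 → ℂ) : Fin 10 → ℂ :=
  ![v 0 ^ 3, v 0 ^ 2 * v 1, v 0 ^ 2 * v 2, v 0 * v 1 ^ 2, v 0 * v 1 * v 2, v 0 * v 2 ^ 2,
    v 1 ^ 3, v 1 ^ 2 * v 2, v 1 * v 2 ^ 2, v 2 ^ 3]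

theorem mon_ne {v} (hv : v ≠ 0) : mon v ≠ 0 := by
  intro h
  apply hv
  have h0 := congrFun h 0
  have h1 := congrFun h 6
  have h2 := congrFun h 9
  simp [mon] at h0 h1 h2
  ext i; fin_cases i <;> assumption

theorem dot_mon (c v) : c ⬝ᵥ mon v = cub c v := by
  simp only [dotProduct, Fin.sum_univ_succ, Fin.sum_univ_zero]
  simp [mon, cub]
  ring

theorem Nmat_mulVec (c v) : (Nmat c).mulVec (mon v) =
    ![v 0 * grd c v 0, v 0 * grd c v 1, v 0 * grd c v 2,
      v 1 * grd c v 0, v 1 * grd c v 1, v 1 * grd c v 2,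
      v 2 * grd c v 0, v 2 * grd c v 1, v 2 * grd c v 2, cub (hessC c) v] := by
  ext i
  show Nmat c i ⬝ᵥ mon v = _
  rw [dot_mon]
  fin_cases i
  all_goals simp [Nmat, cub, grd]
  all_goals ring

theorem prod3_map {S T : Type*} [CommRing S] [CommRing T] (φ : S →+* T) (l n m : Fin 3 → S)
    (i : Fin 10) : φ (prod3 l n m i) = prod3 (φ ∘ l) (φ ∘ n) (φ ∘ m) i := by
  fin_cases i <;> simp [prod3]

theorem vec3_map {S T : Type*} [CommRing S] [CommRing T] (φ : S →+* T) (x y z : S) :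
    φ ∘ ![x, y, z] = ![φ x, φ y, φ z] := by
  ext i; fin_cases i <;> rfl

theorem hessC_map {S T : Type*} [CommRing S] [CommRing T] (φ : S →+* T) (c : Fin 10 → S)
    (i : Fin 10) : φ (hessC c i) = hessC (φ ∘ c) i := by
  have h2 : φ 2 = 2 := map_ofNat φ 2
  have h6 : φ 6 = 6 := map_ofNat φ 6
  simp only [hessC, map_add, map_sub, map_mul, prod3_map, vec3_map, h2, h6, Function.comp_apply]

theorem Nmat_map {S T : Type*} [CommRing S] [CommRing T] (φ : S →+* T) (c : Fin 10 → S) :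
    (Nmat c).map φ = Nmat (φ ∘ c) := by
  have h2 : φ 2 = 2 := map_ofNat φ 2
  have h3 : φ 3 = 3 := map_ofNat φ 3
  ext i j
  by_cases hi : i = 9
  · subst hi
    exact hessC_map φ c j
  fin_cases i
  all_goals first | exact absurd rfl hi | (fin_cases j <;> simp [Nmat, h2, h3])

theorem hess_ker (c v) (h : ∀ i, grd c v i = 0) : (hessT (tens c) v).mulVec v = 0 := by
  have h0 := h 0
  have h1 := h 1
  have h2 := h 2
  simp [grd] at h0 h1 h2
  ext i
  fin_cases i
  all_goals simp [hessT, Matrix.mulVec, dotProduct, Fin.sum_univ_three, tens]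
  · linear_combination h0 / 3
  · linear_combination h1 / 3
  · linear_combination h2 / 3

theorem det_Nmat (c) : (Nmat c).det = 0 ↔ SingC c := by
  constructor
  · intro h
    obtain ⟨w, hw, h⟩ := Matrix.exists_vecMul_eq_zero_iff.2 h
    rw [singC_iff]
    apply DepT.singT (tens_sym c)
    refine ⟨!![3 * w 0, 3 * w 3, 3 * w 6; 3 * w 1, 3 * w 4, 3 * w 7; 3 * w 2, 3 * w 5, 3 * w 8],
      216 * w 9, ?_, fun x => ?_⟩
    · rintro ⟨h1, h2⟩
      apply hw
      have e00 := congrFun (congrFun h1 0) 0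
      have e01 := congrFun (congrFun h1 0) 1
      have e02 := congrFun (congrFun h1 0) 2
      have e10 := congrFun (congrFun h1 1) 0
      have e11 := congrFun (congrFun h1 1) 1
      have e12 := congrFun (congrFun h1 1) 2
      have e20 := congrFun (congrFun h1 2) 0
      have e21 := congrFun (congrFun h1 2) 1
      have e22 := congrFun (congrFun h1 2) 2
      simp at e00 e01 e02 e10 e11 e12 e20 e21 e22 h2
      ext i; fin_cases i <;> assumption
    · have h3 : w ⬝ᵥ (Nmat c).mulVec (mon x) = 0 := by
        rw [Matrix.dotProduct_mulVec, h, zero_dotProduct]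
      rw [Nmat_mulVec, cub_hessC] at h3
      simp only [dotProduct, Fin.sum_univ_succ, Fin.sum_univ_zero] at h3
      have h4 := TA_tens c (Matrix.mulVec !![3 * w 0, 3 * w 3, 3 * w 6; 3 * w 1, 3 * w 4, 3 * w 7; 3 * w 2, 3 * w 5, 3 * w 8] x) x
      generalize TA (tens c) _ x x = T at *
      simp [Matrix.mulVec, dotProduct, Fin.sum_univ_three] at h3 h4
      linear_combination h3 + h4 / 3
  · rintro ⟨v, hv, h⟩
    apply Matrix.exists_mulVec_eq_zero_iff.1
    refine ⟨mon v, mon_ne hv, ?_⟩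
    have : (hessT (tens c) v).det = 0 := Matrix.exists_mulVec_eq_zero_iff.1 ⟨v, hv, hess_ker c v h⟩
    rw [Nmat_mulVec, cub_hessC, h, h, h, this]
    ext i; fin_cases i <;> simp

/-- the polynomial R -/
noncomputable def RR : MvPolynomial Dset ℂ := (Nmat (fun i => X (dd i))).det

theorem eval_RR (a : Dset → ℂ) : eval a RR = 0 ↔ SingC (a ∘ dd) := by
  rw [← det_Nmat, RR, RingHom.map_det, RingHom.mapMatrix_apply, Nmat_map]
  have : (⇑(eval a) ∘ fun i => X (dd i)) = a ∘ dd := by ext i; simp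
  rw [this]

theorem grd_smul (c v) (t : ℂ) (i) : grd c (t • v) i = t ^ 2 * grd c v i := by
  fin_cases i <;> simp [grd] <;> ring

theorem grd_prod3 (l n m v : Fin 3 → ℂ) (i) : grd (prod3 l n m) v i =
    l i * (n 0 * v 0 + n 1 * v 1 + n 2 * v 2) * (m 0 * v 0 + m 1 * v 1 + m 2 * v 2)
    + n i * (l 0 * v 0 + l 1 * v 1 + l 2 * v 2) * (m 0 * v 0 + m 1 * v 1 + m 2 * v 2)
    + m i * (l 0 * v 0 + l 1 * v 1 + l 2 * v 2) * (n 0 * v 0 + n 1 * v 1 + n 2 * v 2) := by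
  fin_cases i <;> simp [grd, prod3] <;> ring

theorem grd_add (c c' v i) : grd (c + c') v i = grd c v i + grd c' v i := by
  fin_cases i <;> simp [grd] <;> ring

/-- parametrization of singular cubics -/
def psi {S : Type*} [CommRing S] (p : Fin 5 → Fin 3 → S) : Fin 10 → S :=
  prod3 (p 0) (p 0) (p 2) + prod3 (p 0) (p 1) (p 3) + prod3 (p 1) (p 1) (p 4)

theorem sing_psi (p : Fin 5 → Fin 3 → ℂ) : SingC (psi p) := by
  have h : (Matrix.of ![p 0, p 1, 0]).det = 0 := by
    apply Matrix.det_eq_zero_of_row_eq_zero 2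
    intro j; rfl
  obtain ⟨v, hv, h⟩ := Matrix.exists_mulVec_eq_zero_iff.2 h
  have h0 := congrFun h 0
  have h1 := congrFun h 1
  simp [Matrix.mulVec, dotProduct, Fin.sum_univ_three] at h0 h1
  refine ⟨v, hv, fun i => ?_⟩
  rw [psi, grd_add, grd_add, grd_prod3, grd_prod3, grd_prod3, h0, h1]
  ring

theorem psi_of_sing (c) (h : SingC c) : ∃ p, psi p = c := by
  obtain ⟨v', hv', h'⟩ := h
  obtain ⟨i, hi⟩ := Function.ne_iff.1 hv'
  simp only [Pi.zero_apply] at hi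
  obtain ⟨v, hvi, h⟩ : ∃ v : Fin 3 → ℂ, v i = 1 ∧ ∀ j, grd c v j = 0 :=
    ⟨(v' i)⁻¹ • v', by simp [hi], fun j => by rw [grd_smul, h', mul_zero]⟩
  have h0 := h 0
  have h1 := h 1
  have h2 := h 2
  simp [grd] at h0 h1 h2
  fin_cases i
  · simp at hvi
    refine ⟨![![-v 1, 1, 0], ![-v 2, 0, 1],
      ![-v 1 * c 6 - v 2 * c 7 + (c 3 * v 0 + 3 * c 6 * v 1 + c 7 * v 2), c 6, c 7],
      ![c 4 * v 0 + 2 * c 7 * v 1 + 2 * c 8 * v 2, 0, 0],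
      ![-v 1 * c 8 - v 2 * c 9 + (c 5 * v 0 + c 8 * v 1 + 3 * c 9 * v 2), c 8, c 9]], ?_⟩
    rw [hvi] at h0 h1 h2 ⊢
    ext j
    fin_cases j
    all_goals simp [psi, prod3]
    all_goals try ring1
    · linear_combination -((h0 + v 1 * h1 + v 2 * h2) / 3 - v 1 * h1 - v 2 * h2)
    · linear_combination -h1
    · linear_combination -h2
  · simp at hvi
    refine ⟨![![1, -v 0, 0], ![0, -v 2, 1],
      ![c 0, -v 0 * c 0 - v 2 * c 2 + (3 * c 0 * v 0 + c 1 * v 1 + c 2 * v 2), c 2],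
      ![0, 2 * c 2 * v 0 + c 4 * v 1 + 2 * c 5 * v 2, 0],
      ![c 5, -v 0 * c 5 - v 2 * c 9 + (c 5 * v 0 + c 8 * v 1 + 3 * c 9 * v 2), c 9]], ?_⟩
    rw [hvi] at h0 h1 h2 ⊢
    ext j
    fin_cases j
    all_goals simp [psi, prod3]
    all_goals try ring1
    · linear_combination -h0
    · linear_combination -((v 0 * h0 + h1 + v 2 * h2) / 3 - v 0 * h0 - v 2 * h2)
    · linear_combination -h2
  · simp at hvi
    refine ⟨![![1, 0, -v 0], ![0, 1, -v 1],
      ![c 0, c 1, -v 0 * c 0 - v 1 * c 1 + (3 * c 0 * v 0 + c 1 * v 1 + c 2 * v 2)],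
      ![0, 0, 2 * c 1 * v 0 + 2 * c 3 * v 1 + c 4 * v 2],
      ![c 3, c 6, -v 0 * c 3 - v 1 * c 6 + (c 3 * v 0 + 3 * c 6 * v 1 + c 7 * v 2)]], ?_⟩
    rw [hvi] at h0 h1 h2 ⊢
    ext j
    fin_cases j
    all_goals simp [psi, prod3]
    all_goals try ring1
    · linear_combination -h0
    · linear_combination -h1
    · linear_combination -((v 0 * h0 + v 1 * h1 + h2) / 3 - v 0 * h0 - v 1 * h1)

theorem RR_ne : RR ≠ 0 := by
  intro h
  have h1 := (eval_RR (![1, 0, 0, 0, 0, 0, 1, 0, 0, 1] ∘ di)).1 (by rw [h]; simp)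
  obtain ⟨v, hv, h⟩ := h1
  apply hv
  have h0 := h 0
  have h1 := h 1
  have h2 := h 2
  simp [grd, di_dd] at h0 h1 h2
  ext i; fin_cases i <;> assumption

theorem eval_psi (p : Fin 5 × Fin 3 → ℂ) (P : MvPolynomial Dset ℂ) :
    eval p (aeval (fun d : Dset => psi (fun i j => (X (i, j) : MvPolynomial (Fin 5 × Fin 3) ℂ)) (di d)) P)
      = eval (psi (fun i j => p (i, j)) ∘ di) P := by
  have hpsi : ∀ k, eval p (psi (fun i j => (X (i, j) : MvPolynomial (Fin 5 × Fin 3) ℂ)) k)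
      = psi (fun i j => p (i, j)) k := by
    intro k
    simp only [psi, Pi.add_apply, map_add, prod3_map]
    simp only [Function.comp_def, eval_X]
  induction P using MvPolynomial.induction_on with
  | C a => simp
  | add p q hp hq => rw [map_add, map_add, hp, hq, map_add]
  | mul_X q d hq => rw [map_mul, map_mul, hq, aeval_X, hpsi, map_mul, eval_X]; rfl

theorem comp_di_dd (c : Fin 10 → ℂ) : (c ∘ di) ∘ dd = c := by
  ext i; simp [di_dd]

theorem comp_dd_di (a : Dset → ℂ) : (a ∘ dd) ∘ di = a := by
  ext i; simp [dd_di]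

theorem exists_irr : ∃ Δ : MvPolynomial Dset ℂ, Irreducible Δ ∧
    ∀ a : Dset → ℂ, eval a Δ = 0 ↔ SingC (a ∘ dd) := by
  obtain ⟨f, hf, hassoc⟩ := WfDvdMonoid.exists_factors RR RR_ne
  set φ := (aeval (fun d : Dset => psi (fun i j => (X (i, j) : MvPolynomial (Fin 5 × Fin 3) ℂ)) (di d)) :
    MvPolynomial Dset ℂ →ₐ[ℂ] MvPolynomial (Fin 5 × Fin 3) ℂ) with hφ
  have hR : φ RR = 0 := by
    apply MvPolynomial.funext
    intro p
    rw [hφ, eval_psi, map_zero, eval_RR, comp_di_dd]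
    exact sing_psi _
  have hprod : φ f.prod = 0 := by
    obtain ⟨u, hu⟩ := hassoc.symm
    rw [← hu, map_mul, hR, zero_mul]
  rw [map_multiset_prod, Multiset.prod_eq_zero_iff, Multiset.mem_map] at hprod
  obtain ⟨Δ, hΔ, hΔ0⟩ := hprod
  refine ⟨Δ, hf Δ hΔ, fun a => ⟨fun h => ?_, fun h => ?_⟩⟩
  · rw [← eval_RR]
    obtain ⟨q, hq⟩ := (Multiset.dvd_prod hΔ).trans hassoc.dvd
    rw [hq, map_mul, h, zero_mul]
  · obtain ⟨p, hp⟩ := psi_of_sing _ h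
    have := eval_psi (fun x => p x.1 x.2) Δ
    rw [← hφ, hΔ0, map_zero] at this
    change 0 = eval (psi p ∘ di) Δ at this
    rw [hp, comp_dd_di] at this
    exact this.symm

theorem semi_inv {σ : Type} [Finite σ] {Δ : MvPolynomial σ ℂ} (hirr : Irreducible Δ)
    (A B : MvPolynomial σ ℂ →ₐ[ℂ] MvPolynomial σ ℂ) (fA fB : (σ → ℂ) → (σ → ℂ))
    (hA : ∀ a P, eval a (A P) = eval (fA a) P) (hB : ∀ a P, eval a (B P) = eval (fB a) P)
    (hAB : ∀ a, fA (fB a) = a) (hBA : ∀ a, fB (fA a) = a)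
    (zA : ∀ a, eval a Δ = 0 → eval (fA a) Δ = 0) (zB : ∀ a, eval a Δ = 0 → eval (fB a) Δ = 0) :
    ∃ c : ℂ, A Δ = C c * Δ := by
  have hp : Prime Δ := hirr.prime
  have : (Ideal.span {Δ}).IsPrime := (Ideal.span_singleton_prime hp.ne_zero).2 hp
  have key : ∀ P : MvPolynomial σ ℂ, (∀ a, eval a Δ = 0 → eval a P = 0) → Δ ∣ P := by
    intro P hP
    rw [← Ideal.mem_span_singleton, ← IsPrime.vanishingIdeal_zeroLocus (K := ℂ) (Ideal.span {Δ}),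
      mem_vanishingIdeal_iff]
    intro x hx
    have h1 := hx Δ (Ideal.mem_span_singleton_self Δ)
    rw [aeval_eq_eval] at h1 ⊢
    exact hP x h1
  have hABP : ∀ P, A (B P) = P := by
    intro P
    apply MvPolynomial.funext
    intro a
    rw [hA, hB, hBA]
  have hBAP : ∀ P, B (A P) = P := by
    intro P
    apply MvPolynomial.funext
    intro a
    rw [hB, hA, hAB]
  obtain ⟨Q, hQ⟩ := key (A Δ) (fun a h => by rw [hA]; exact zA a h)
  obtain ⟨Q', hQ'⟩ := key (B Δ) (fun a h => by rw [hB]; exact zB a h)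
  have h1 : Δ * (Q * A Q') = Δ * 1 := by
    have := hABP Δ
    rw [hQ', map_mul, hQ] at this
    rw [mul_one]
    linear_combination this
  have h2 := mul_left_cancel₀ hp.ne_zero h1
  obtain ⟨c, -, hc⟩ := isUnit_iff_eq_C_of_isReduced.1 (IsUnit.of_mul_eq_one _ h2)
  exact ⟨c, by rw [hQ, hc, mul_comm]⟩

theorem eval_aeval_gen {σ τ : Type} (F : σ → MvPolynomial τ ℂ) (a : τ → ℂ) (P : MvPolynomial σ ℂ) :
    eval a (aeval F P) = eval (fun d => eval a (F d)) P := by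
  induction P using MvPolynomial.induction_on with
  | C a => simp
  | add p q hp hq => rw [map_add, map_add, hp, hq, map_add]
  | mul_X q d hq => rw [map_mul, map_mul, hq, aeval_X, map_mul, eval_X]

theorem coeff_scale {σ : Type} (t : ℂ) (P : MvPolynomial σ ℂ) (m : σ →₀ ℕ) :
    coeff m (aeval (fun d => C t * X d : σ → MvPolynomial σ ℂ) P) = t ^ m.degree * coeff m P := by
  classical
  induction P using MvPolynomial.induction_on' with
  | add p q hp hq => rw [map_add, coeff_add, hp, hq, coeff_add]; ring
  | monomial u r =>
    have : aeval (fun d => C t * X d : σ → MvPolynomial σ ℂ) (monomial u r)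
        = C (t ^ u.degree) * monomial u r := by
      rw [aeval_monomial, monomial_eq]
      simp only [mul_pow, Finsupp.prod_mul]
      have : (u.prod fun d k => (C t : MvPolynomial σ ℂ) ^ k) = C (t ^ u.degree) := by
        simp only [Finsupp.prod, ← map_pow, ← map_prod, Finset.prod_pow_eq_pow_sum, Finsupp.degree]
        rfl
      rw [this, algebraMap_eq]
      ring
    rw [this, coeff_C_mul, coeff_monomial]
    split_ifs with h
    · rw [h]
    · simp

theorem homog_of_scale {σ : Type} {Δ : MvPolynomial σ ℂ} (hirr : Irreducible Δ) (c : ℂ)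
    (h : aeval (fun d => C 2 * X d : σ → MvPolynomial σ ℂ) Δ = C c * Δ) :
    ∃ n : ℕ, 0 < n ∧ Δ.IsHomogeneous n := by
  have h1 : ∀ m, coeff m Δ ≠ 0 → (2 : ℂ) ^ m.degree = c := by
    intro m hm
    have := congrArg (coeff m) h
    rw [coeff_scale, coeff_C_mul] at this
    exact mul_right_cancel₀ hm this
  obtain ⟨m, hm⟩ := exists_coeff_ne_zero hirr.ne_zero
  have hh : Δ.IsHomogeneous m.degree := by
    intro d hd
    have h2 : (2 : ℂ) ^ d.degree = 2 ^ m.degree := by rw [h1 m hm, h1 d hd]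
    have h3 : (2 : ℕ) ^ d.degree = 2 ^ m.degree := by exact_mod_cast h2
    have h4 := Nat.pow_right_injective le_rfl h3
    rw [← h4, Finsupp.degree_eq_weight_one]
    rfl
  refine ⟨_, Nat.pos_of_ne_zero fun h0 => ?_, hh⟩
  rw [h0] at hh
  have h5 := totalDegree_eq_zero_iff_eq_C.1 (Nat.le_zero.1 hh.totalDegree_le)
  apply hirr.not_isUnit
  rw [h5]
  apply IsUnit.map
  apply IsUnit.mk0
  intro h6
  rw [h6, map_zero] at h5
  exact hirr.ne_zero h5

theorem sing_smul {c : Fin 10 → ℂ} (t : ℂ) (h : SingC c) : SingC (t • c) := by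
  obtain ⟨v, hv, h⟩ := h
  refine ⟨v, hv, fun i => ?_⟩
  have : grd (t • c) v i = t * grd c v i := by
    fin_cases i <;> simp [grd] <;> ring
  rw [this, h, mul_zero]

theorem homog_disc {Δ : MvPolynomial Dset ℂ} (hirr : Irreducible Δ)
    (hs : ∀ a : Dset → ℂ, eval a Δ = 0 ↔ SingC (a ∘ dd)) :
    ∃ n : ℕ, 0 < n ∧ Δ.IsHomogeneous n := by
  have hz : ∀ (t : ℂ) (a : Dset → ℂ), eval a Δ = 0 → eval (t • a) Δ = 0 := by
    intro t a h
    rw [hs] at h ⊢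
    exact sing_smul t h
  have hev : ∀ (t : ℂ) (a : Dset → ℂ) (P : MvPolynomial Dset ℂ),
      eval a (aeval (fun d => C t * X d : Dset → MvPolynomial Dset ℂ) P) = eval (t • a) P := by
    intro t a P
    rw [eval_aeval_gen]
    congr 2
    ext d; simp
  obtain ⟨c, hc⟩ := semi_inv hirr (aeval (fun d => C 2 * X d : Dset → MvPolynomial Dset ℂ))
    (aeval (fun d => C 2⁻¹ * X d : Dset → MvPolynomial Dset ℂ))
    (fun a => (2 : ℂ) • a) (fun a => (2⁻¹ : ℂ) • a) (hev 2) (hev 2⁻¹) (fun a => by simp)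
    (fun a => by simp) (hz 2) (hz 2⁻¹)
  exact homog_of_scale hirr c hc

/-- monomial exponent -/
noncomputable def dmon (d : Dset) : Fin 3 →₀ ℕ := Finsupp.equivFunOnFinite.symm d.1

theorem dmon_inj {d e : Dset} (h : dmon d = dmon e) : d = e :=
  Subtype.ext (Finsupp.equivFunOnFinite.symm.injective h)

theorem cubic_eq (a : Dset → ℂ) : cubic a = ∑ d, monomial (dmon d) (a d) := by
  unfold cubic
  refine Finset.sum_congr rfl fun d _ => ?_
  rw [monomial_eq, Finsupp.prod_fintype _ _ (fun _ => by simp), Fin.prod_univ_three]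
  simp only [dmon, Finsupp.coe_equivFunOnFinite_symm]
  ring

theorem coeffVec_cubic (a : Dset → ℂ) : coeffVec (cubic a) = a := by
  classical
  ext d
  show coeff (dmon d) (cubic a) = a d
  rw [cubic_eq, coeff_sum]
  simp only [coeff_monomial]
  rw [Finset.sum_eq_single d]
  · simp
  · intro e _ he
    rw [if_neg fun h => he (dmon_inj h)]
  · simp

theorem dmon_degree (d : Dset) : (dmon d).degree = 3 := by
  rw [Finsupp.degree_eq_sum, Fin.sum_univ_three]
  exact d.2

theorem cubic_homog (a) : (cubic a).IsHomogeneous 3 := by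
  rw [cubic_eq]
  apply IsHomogeneous.sum
  intro d _
  exact isHomogeneous_monomial _ (dmon_degree d)

theorem cubic_coeffVec {f : MvPolynomial (Fin 3) ℂ} (hf : f.IsHomogeneous 3) :
    cubic (coeffVec f) = f := by
  classical
  ext m
  by_cases hm : m.degree = 3
  · obtain ⟨d, rfl⟩ : ∃ d, m = dmon d := by
      rw [Finsupp.degree_eq_sum, Fin.sum_univ_three] at hm
      exact ⟨⟨m, hm⟩, by ext i; rfl⟩
    exact congrFun (coeffVec_cubic (coeffVec f)) d
  · rw [hf.coeff_eq_zero hm, (cubic_homog _).coeff_eq_zero hm]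

theorem substSL_homog (g) {f : MvPolynomial (Fin 3) ℂ} (hf : f.IsHomogeneous 3) :
    (substSL g f).IsHomogeneous 3 := by
  have := hf.aeval (fun i : Fin 3 => ∑ j : Fin 3, C (g.1 i j) * X j) (n := 1) (fun i => by
    apply IsHomogeneous.sum
    intro j _
    exact isHomogeneous_C_mul_X _ _)
  rw [one_mul] at this
  exact this

/-- action on coefficient vectors -/
noncomputable def act (g : Matrix.SpecialLinearGroup (Fin 3) ℂ) (a : Dset → ℂ) : Dset → ℂ :=
  coeffVec (substSL g (cubic a))

theorem cubic_act (g a) : cubic (act g a) = substSL g (cubic a) :=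
  cubic_coeffVec (substSL_homog g (cubic_homog a))

theorem eval_substSL (g) (f : MvPolynomial (Fin 3) ℂ) (v) :
    eval v (substSL g f) = eval (g.1.mulVec v) f := by
  unfold substSL
  rw [eval_aeval_gen]
  congr 2
  ext i
  simp [Matrix.mulVec, dotProduct]

theorem substSL_mul (g h f) : substSL g (substSL h f) = substSL (h * g) f := by
  apply MvPolynomial.funext
  intro v
  rw [eval_substSL, eval_substSL, eval_substSL, Matrix.mulVec_mulVec]
  rfl

theorem substSL_one (f) : substSL 1 f = f := by
  apply MvPolynomial.funext
  intro v
  rw [eval_substSL]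
  congr 2
  exact Matrix.one_mulVec v

theorem act_mul (g h a) : act (h * g) a = act g (act h a) := by
  rw [act, act, cubic_act, substSL_mul]

theorem act_one (a) : act 1 a = a := by
  rw [act, substSL_one, coeffVec_cubic]

theorem cub_act (g a v) : cub (act g a ∘ dd) v = cub (a ∘ dd) (g.1.mulVec v) := by
  rw [← eval_cubic, cubic_act, eval_substSL, eval_cubic]

theorem cub_polar (c w v) : cub c (w + v) + cub c (w - v) - 2 * cub c w =
    2 * (w 0 * grd c v 0 + w 1 * grd c v 1 + w 2 * grd c v 2) := by
  simp [cub, grd]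
  ring

theorem sing_polar (c) : SingC c ↔ ∃ v : Fin 3 → ℂ, v ≠ 0 ∧
    ∀ w, cub c (w + v) + cub c (w - v) - 2 * cub c w = 0 := by
  constructor
  · rintro ⟨v, hv, h⟩
    refine ⟨v, hv, fun w => ?_⟩
    rw [cub_polar, h, h, h]; ring
  · rintro ⟨v, hv, h⟩
    refine ⟨v, hv, fun i => ?_⟩
    have := h (Pi.single i 1)
    rw [cub_polar] at this
    fin_cases i <;> simpa using this

theorem mul_inv_mulVec (g : Matrix.SpecialLinearGroup (Fin 3) ℂ) (v : Fin 3 → ℂ) :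
    g.1.mulVec ((g⁻¹).1.mulVec v) = v := by
  rw [Matrix.mulVec_mulVec]
  have : g.1 * (g⁻¹).1 = 1 := congrArg Subtype.val (mul_inv_cancel g)
  rw [this, Matrix.one_mulVec]

theorem sing_of_act {g a} (h : SingC (a ∘ dd)) : SingC (act g a ∘ dd) := by
  rw [sing_polar] at h ⊢
  obtain ⟨v, hv, h⟩ := h
  refine ⟨(g⁻¹).1.mulVec v, fun h0 => hv ?_, fun w => ?_⟩
  · rw [← mul_inv_mulVec g v, h0, Matrix.mulVec_zero]
  · rw [cub_act, cub_act, cub_act, Matrix.mulVec_add, Matrix.mulVec_sub, mul_inv_mulVec]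
    exact h _

/-- the action on polynomials -/
noncomputable def actP (g : Matrix.SpecialLinearGroup (Fin 3) ℂ) :
    MvPolynomial Dset ℂ →ₐ[ℂ] MvPolynomial Dset ℂ :=
  aeval fun d => ∑ e : Dset, C (coeff (dmon d) (substSL g (monomial (dmon e) 1))) * X e

theorem act_apply (g a d) : act g a d =
    ∑ e : Dset, coeff (dmon d) (substSL g (monomial (dmon e) 1)) * a e := by
  show coeff (dmon d) (substSL g (cubic a)) = _
  have : substSL g (cubic a) = ∑ e, C (a e) * substSL g (monomial (dmon e) 1) := by
    rw [cubic_eq]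
    unfold substSL
    rw [map_sum]
    refine Finset.sum_congr rfl fun e _ => ?_
    have : (monomial (dmon e) (a e) : MvPolynomial (Fin 3) ℂ) = C (a e) * monomial (dmon e) 1 := by
      rw [C_mul_monomial, mul_one]
    rw [this, map_mul, algHom_C]
    rfl
  rw [this, coeff_sum]
  refine Finset.sum_congr rfl fun e _ => ?_
  rw [coeff_C_mul, mul_comm]

theorem eval_actP (g a P) : eval a (actP g P) = eval (act g a) P := by
  unfold actP
  rw [eval_aeval_gen]
  congr 2
  ext d
  rw [act_apply]
  simp

open Matrix.SpecialLinearGroup in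
theorem char_trivial (χ : Matrix.SpecialLinearGroup (Fin 3) ℂ →* ℂ) (g) : χ g = 1 := by
  have hne : ∀ g, χ g ≠ 0 := by
    intro g h
    have : χ (g * g⁻¹) = 1 := by rw [mul_inv_cancel, map_one]
    rw [map_mul, h, zero_mul] at this
    exact zero_ne_one this
  have ht : ∀ (i j : Fin 3) (hij : i ≠ j) (c : ℂ), χ (transvection hij c) = 1 := by
    intro i j hij c
    have h1 : diag2n hij (2 : ℂ) two_ne_zero * transvection hij (c / 3) =
        transvection hij c * transvection hij (c / 3) * diag2n hij (2 : ℂ) two_ne_zero := by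
      rw [← transvection_add]
      ext k l
      simp only [Matrix.SpecialLinearGroup.coe_mul, transvection_coe, diag2n_coe, Matrix.add_apply,
        Matrix.diagonal_mul, Matrix.mul_diagonal, Matrix.single_apply, Matrix.one_apply]
      by_cases hk : i = k ∧ j = l
      · obtain ⟨rfl, rfl⟩ := hk
        simp [hij, hij.symm]
        ring
      · rw [if_neg hk, if_neg hk]
        by_cases hkl : k = l
        · subst hkl
          simp
        · simp [hkl]
    have h2 := congrArg χ h1
    rw [map_mul, map_mul, map_mul] at h2
    have h3 := mul_ne_zero (hne (diag2n hij (2 : ℂ) two_ne_zero)) (hne (transvection hij (c / 3)))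
    apply mul_right_cancel₀ h3
    linear_combination -h2
  refine diagonal_transvection_induction' (fun g => χ g = 1) g (fun i j hij c hc => ?_) ht
    (fun A B hA hB => by rw [map_mul, hA, hB, one_mul])
  have : diag2n hij c hc = transvection hij c * transvection hij.symm (-c⁻¹) * transvection hij c *
      transvection hij (-1) * transvection hij.symm 1 * transvection hij (-1) := by
    ext k l
    fin_cases i <;> fin_cases j <;> first | exact absurd rfl hij |
      (fin_cases k <;> fin_cases l <;>
      simp [diag2n_coe, transvection_coe, mul_add, add_mul, hc])
  rw [this]
  simp only [map_mul, ht, mul_one]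

theorem inv_disc {Δ : MvPolynomial Dset ℂ} (hirr : Irreducible Δ)
    (hs : ∀ a : Dset → ℂ, eval a Δ = 0 ↔ SingC (a ∘ dd)) (g a) :
    eval (act g a) Δ = eval a Δ := by
  have hz : ∀ g (a : Dset → ℂ), eval a Δ = 0 → eval (act g a) Δ = 0 := by
    intro g a h
    rw [hs] at h ⊢
    exact sing_of_act h
  have hex : ∀ g, ∃ c : ℂ, ∀ a, eval (act g a) Δ = c * eval a Δ := by
    intro g
    obtain ⟨c, hc⟩ := semi_inv hirr (actP g) (actP g⁻¹) (act g) (act g⁻¹) (eval_actP g)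
      (eval_actP g⁻¹) (fun a => by rw [← act_mul, inv_mul_cancel, act_one])
      (fun a => by rw [← act_mul, mul_inv_cancel, act_one]) (hz g) (hz g⁻¹)
    refine ⟨c, fun a => ?_⟩
    rw [← eval_actP, hc, map_mul, eval_C]
  choose χ hχ using hex
  obtain ⟨a0, ha0⟩ : ∃ a0, eval a0 Δ ≠ 0 := by
    by_contra! h
    apply hirr.ne_zero
    apply MvPolynomial.funext
    intro x
    rw [h, map_zero]
  let χ' : Matrix.SpecialLinearGroup (Fin 3) ℂ →* ℂ :=
    { toFun := χ
      map_one' := by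
        have := hχ 1 a0
        rw [act_one] at this
        apply mul_right_cancel₀ ha0
        rw [← this, one_mul]
      map_mul' := fun g h => by
        apply mul_right_cancel₀ ha0
        rw [← hχ, act_mul, hχ, hχ]
        ring }
  have h1 : χ g = 1 := char_trivial χ' g
  rw [hχ, h1, one_mul]

/-- There is an irreducible homogeneous `SL₃`-invariant polynomial `Δ` in the 10
coefficients of a plane cubic whose nonvanishing at `a` is equivalent to smoothness of the
cubic `f_a` (i.e. to `C(f_a)` being an elliptic curve). -/
theorem exists_discriminant :
    ∃ Δ : MvPolynomial Dset ℂ,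
      Irreducible Δ ∧
      (∃ n : ℕ, 0 < n ∧ Δ.IsHomogeneous n) ∧
      (∀ (g : Matrix.SpecialLinearGroup (Fin 3) ℂ) (a : Dset → ℂ),
        eval (coeffVec (substSL g (cubic a))) Δ = eval a Δ) ∧
      (∀ a : Dset → ℂ, eval a Δ ≠ 0 ↔ IsSmoothCubic (cubic a)) := by
  obtain ⟨Δ, hirr, hs⟩ := exists_irr
  refine ⟨Δ, hirr, homog_disc hirr hs, fun g a => inv_disc hirr hs g a, fun a => ?_⟩
  rw [smooth_iff, Ne, hs]
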